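/- Let σ ∈ (0,1] and let α satisfy (3+2σ)/4 < α < min{3/2, 1+σ}. Then W_{α,σ} is not a critical Hardy-weight for (−Δ_ℕ)^σ: there exists a nonzero W̃ : ℕ → [0,∞) such that Q^σ(f) ≥ Σ_{n≥1}(W_{α,σ}(n)+W̃(n))·f(n)² for every finitely supported f : ℕ → ℝ. -/

import Mathlib

open Real Filter

/-- Generalized binomial coefficient via the Gamma function. -/
noncomputable def rbinom (a b : ℝ) : ℝ :=
  Real.Gamma (a + 1) / (Real.Gamma (b + 1) * Real.Gamma (a - b + 1))

/-- Kernel of the fractional Laplacian `(-Δ_ℕ)^σ` on the discrete half-line. -/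
noncomputable def Kker (σ : ℝ) (m n : ℕ) : ℝ :=
  (-1 : ℝ) ^ (m + n) *
    (rbinom (2 * σ) (σ + m - n) - rbinom (2 * σ) (σ + m + n))

/-- Quadratic form of `(-Δ_ℕ)^σ` (used for finitely supported `f` with `f 0 = 0`). -/
noncomputable def Qform (σ : ℝ) (f : ℕ → ℝ) : ℝ :=
  ∑' m : ℕ, ∑' n : ℕ, Kker σ m n * f m * f n

/-- The Hardy-weight `W_{α,σ}`. -/
noncomputable def Wweight (σ α : ℝ) (n : ℕ) : ℝ :=
  4 ^ σ * (Real.Gamma (3/2 - α + σ) * Real.Gamma α /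
            (Real.Gamma (α - σ) * Real.Gamma (3/2 - α))) *
    (Real.Gamma (n + α - σ - 1) * Real.Gamma (n - α + 2) /
      (Real.Gamma (n - α + σ + 2) * Real.Gamma (n + α - 1)))

/-- The Riesz potential `I_α`. -/
noncomputable def Riesz (α : ℝ) (n : ℕ) : ℝ :=
  (4 * n / (4 ^ α * Real.sqrt 2)) * Real.Gamma (3/2 - α) *
    Real.Gamma (n + α - 1) / (Real.Gamma α * Real.Gamma (n - α + 2))

/-!
The sine moments `u s n = ∫₀^π |1 - e^{iθ}|^{2(s-1)} sin θ sin (n θ) dθ` satisfy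
`∑ₙ K^σ_{m,n} u s n = u (s + σ) m`, because `K^σ` acts on the functions `n ↦ sin (n θ)` as
multiplication by `|1 - e^{iθ}|^{2σ}`. For `σ ≤ 1` the off-diagonal entries of `K^σ` are
nonpositive, so by the ground state representation every quotient `u (s + σ) / u s` is a
Hardy-weight. In closed form this quotient at `s = 1 - α` is `W_{α,σ}`, for every `σ < α < 3/2`.

The reflection `α ↦ 3/2 + σ - α` preserves this range and the prefactor of `W_{α,σ}`. For
`α > (3 + 2σ)/4` it strictly increases the remaining quotient of Gamma functions: by Euler's limit
formula, products of Gamma functions whose arguments have equal sums can be compared through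
polynomial inequalities. Thus `W_{3/2+σ-α,σ}` is a Hardy-weight strictly larger than `W_{α,σ}`.
-/

open MeasureTheory Set
open scoped Topology

section Gamma

lemma inv_Gamma_eq_mul_inv_Gamma_add_one (x : ℝ) : (Gamma x)⁻¹ = x * (Gamma (x + 1))⁻¹ := by
  rcases eq_or_ne x 0 with rfl | hx
  · simp
  · rw [Gamma_add_one hx, mul_inv, mul_inv_cancel_left₀ hx]

variable {ι : Type*} {t : Finset ι} {a b : ι → ℝ}

lemma prod_GammaSeq (t : Finset ι) (a : ι → ℝ) {n : ℕ} (hn : n ≠ 0) :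
    ∏ i ∈ t, GammaSeq (a i) n =
      (n : ℝ) ^ (∑ i ∈ t, a i) * (n.factorial : ℝ) ^ t.card /
        ∏ j ∈ Finset.range (n + 1), ∏ i ∈ t, (a i + j) := by
  have hn' : (0 : ℝ) < n := by exact_mod_cast hn.bot_lt
  simp only [GammaSeq, Finset.prod_div_distrib, Finset.prod_mul_distrib, Finset.prod_const]
  rw [Finset.prod_comm, rpow_sum_of_pos hn']

/- By Euler's limit formula, `∏ Γ(a i)` is the limit of a quantity that depends on `a` only through
`∑ a i` and the products `∏ (a i + j)` in its denominator. -/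
lemma prod_Gamma_le_prod_Gamma (ha : ∀ i ∈ t, 0 < a i)
    (hsum : ∑ i ∈ t, a i = ∑ i ∈ t, b i)
    (hprod : ∀ j : ℕ, ∏ i ∈ t, (a i + j) ≤ ∏ i ∈ t, (b i + j)) :
    ∏ i ∈ t, Gamma (b i) ≤ ∏ i ∈ t, Gamma (a i) := by
  have hlim (c : ι → ℝ) := tendsto_finsetProd t fun i _ => GammaSeq_tendsto_Gamma (c i)
  refine le_of_tendsto_of_tendsto (hlim b) (hlim a) ?_
  filter_upwards [eventually_ne_atTop 0] with n hn
  have hpos (j : ℕ) : 0 < ∏ i ∈ t, (a i + j) :=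
    Finset.prod_pos fun i hi => add_pos_of_pos_of_nonneg (ha i hi) j.cast_nonneg
  rw [prod_GammaSeq t a hn, prod_GammaSeq t b hn, hsum]
  exact div_le_div_of_nonneg_left (by positivity) (Finset.prod_pos fun j _ => hpos j)
    (Finset.prod_le_prod (fun j _ => (hpos j).le) fun j _ => hprod j)

lemma prod_Gamma_lt_prod_Gamma (ha : ∀ i ∈ t, 0 < a i) (hb : ∀ i ∈ t, 0 < b i)
    (hsum : ∑ i ∈ t, a i = ∑ i ∈ t, b i)
    (hprod : ∀ j : ℕ, ∏ i ∈ t, (a i + j) ≤ ∏ i ∈ t, (b i + j))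
    (hlt : ∏ i ∈ t, a i < ∏ i ∈ t, b i) :
    ∏ i ∈ t, Gamma (b i) < ∏ i ∈ t, Gamma (a i) := by
  have hshift : ∏ i ∈ t, Gamma (b i + 1) ≤ ∏ i ∈ t, Gamma (a i + 1) :=
    prod_Gamma_le_prod_Gamma (fun i hi => add_pos (ha i hi) one_pos)
      (by simp only [Finset.sum_add_distrib, hsum])
      fun j => by simpa [add_assoc, add_comm (1 : ℝ)] using hprod (j + 1)
  have hfactor {c : ι → ℝ} (hc : ∀ i ∈ t, 0 < c i) :
      ∏ i ∈ t, Gamma (c i + 1) = (∏ i ∈ t, c i) * ∏ i ∈ t, Gamma (c i) := by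
    rw [← Finset.prod_mul_distrib]
    exact Finset.prod_congr rfl fun i hi => Gamma_add_one (hc i hi).ne'
  have hΓa : 0 < ∏ i ∈ t, Gamma (a i) := Finset.prod_pos fun i hi => Gamma_pos_of_pos (ha i hi)
  refine lt_of_mul_lt_mul_left (a := ∏ i ∈ t, b i) ?_ (Finset.prod_nonneg fun i hi => (hb i hi).le)
  rw [← hfactor hb]
  calc ∏ i ∈ t, Gamma (b i + 1) ≤ ∏ i ∈ t, Gamma (a i + 1) := hshift
    _ = (∏ i ∈ t, a i) * ∏ i ∈ t, Gamma (a i) := hfactor ha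
    _ < (∏ i ∈ t, b i) * ∏ i ∈ t, Gamma (a i) := by gcongr

end Gamma

section BetaIntegral

variable {p q : ℝ}

lemma ofReal_rpow_mul_one_sub_rpow {x : ℝ} (hx : x ∈ Ioc 0 1) (p q : ℝ) :
    ((x ^ (p - 1) * (1 - x) ^ (q - 1) : ℝ) : ℂ) =
      (x : ℂ) ^ ((p : ℂ) - 1) * (1 - (x : ℂ)) ^ ((q : ℂ) - 1) := by
  push_cast [Complex.ofReal_cpow hx.1.le, Complex.ofReal_cpow (sub_nonneg.2 hx.2)]
  rfl

lemma intervalIntegrable_rpow_mul_one_sub_rpow (hp : 0 < p) (hq : 0 < q) :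
    IntervalIntegrable (fun x : ℝ => x ^ (p - 1) * (1 - x) ^ (q - 1)) volume 0 1 := by
  have hbeta := Complex.betaIntegral_convergent (u := p) (v := q) (by simpa) (by simpa)
  rw [intervalIntegrable_iff_integrableOn_Ioc_of_le zero_le_one] at hbeta ⊢
  exact (hbeta.congr_fun (fun x hx => (ofReal_rpow_mul_one_sub_rpow hx p q).symm)
    measurableSet_Ioc).re

lemma integral_rpow_mul_one_sub_rpow (hp : 0 < p) (hq : 0 < q) :
    ∫ x in (0 : ℝ)..1, x ^ (p - 1) * (1 - x) ^ (q - 1) = Gamma p * Gamma q / Gamma (p + q) := by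
  have hbeta := Complex.betaIntegral_eq_Gamma_mul_div p q (by simpa) (by simpa)
  rw [Complex.betaIntegral, ← Complex.ofReal_add, Complex.Gamma_ofReal, Complex.Gamma_ofReal,
    Complex.Gamma_ofReal] at hbeta
  have hreal : ∫ x in (0 : ℝ)..1, (x : ℂ) ^ ((p : ℂ) - 1) * (1 - (x : ℂ)) ^ ((q : ℂ) - 1) =
      ((∫ x in (0 : ℝ)..1, x ^ (p - 1) * (1 - x) ^ (q - 1) : ℝ) : ℂ) := by
    rw [← intervalIntegral.integral_ofReal, intervalIntegral.integral_of_le zero_le_one,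
      intervalIntegral.integral_of_le zero_le_one]
    exact setIntegral_congr_fun measurableSet_Ioc
      fun x hx => (ofReal_rpow_mul_one_sub_rpow hx p q).symm
  exact_mod_cast hreal.symm.trans hbeta

end BetaIntegral

/-- The symbol `|1 - e^{iθ}|² = 2 - 2 cos θ` of the discrete Laplacian on `ℤ`. -/
noncomputable def lapSymbol (θ : ℝ) : ℝ := 2 - 2 * cos θ

section Symbol

variable {s θ : ℝ}

lemma lapSymbol_eq_four_mul_sin_half_sq (θ : ℝ) : lapSymbol θ = 4 * sin (θ / 2) ^ 2 := by
  rw [lapSymbol, sin_sq_eq_half_sub, mul_div_cancel₀ θ two_ne_zero]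
  ring

lemma lapSymbol_nonneg (θ : ℝ) : 0 ≤ lapSymbol θ := by
  rw [lapSymbol_eq_four_mul_sin_half_sq]
  positivity

lemma lapSymbol_pos (hθ : θ ∈ Ioc 0 π) : 0 < lapSymbol θ := by
  have hsin : 0 < sin (θ / 2) := sin_pos_of_pos_of_lt_pi (by linarith [hθ.1])
    (by linarith [hθ.2, pi_pos])
  rw [lapSymbol_eq_four_mul_sin_half_sq]
  positivity

@[fun_prop]
lemma continuous_lapSymbol : Continuous lapSymbol := by
  unfold lapSymbol
  fun_prop

lemma continuous_lapSymbol_rpow (hs : 0 ≤ s) : Continuous fun θ => lapSymbol θ ^ s :=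
  continuous_lapSymbol.rpow_const fun _ => Or.inr hs

lemma hasDerivAt_lapSymbol (θ : ℝ) : HasDerivAt lapSymbol (2 * sin θ) θ := by
  exact (((hasDerivAt_cos θ).const_mul 2).const_sub 2).congr_deriv (by ring)

lemma sin_sq_le_lapSymbol (θ : ℝ) : sin θ ^ 2 ≤ lapSymbol θ := by
  rw [lapSymbol, sin_sq]
  nlinarith [sq_nonneg (1 - cos θ)]

lemma abs_sin_natCast_mul_le (n : ℕ) (θ : ℝ) : |sin (n * θ)| ≤ n * |sin θ| := by
  induction n with
  | zero => simp
  | succ n ih =>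
    push_cast
    rw [add_one_mul, sin_add]
    calc |sin (n * θ) * cos θ + cos (n * θ) * sin θ|
        ≤ |sin (n * θ)| * |cos θ| + |cos (n * θ)| * |sin θ| := by
          simpa only [abs_mul] using abs_add_le (sin (n * θ) * cos θ) (cos (n * θ) * sin θ)
      _ ≤ |sin (n * θ)| * 1 + 1 * |sin θ| := by
          gcongr <;> exact abs_cos_le_one _
      _ ≤ (n + 1) * |sin θ| := by linarith

/- The substitution `x = sin² (θ / 2)` turns the integral of `lapSymbol θ ^ s` into a Beta
integral. -/
lemma sin_half_mul_cos_half_mul_beta_integrand (s : ℝ) (hθ : θ ∈ Ioo 0 π) :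
    sin (θ / 2) * cos (θ / 2) * ((sin (θ / 2) ^ 2) ^ (s + 1 / 2 - 1) *
      (1 - sin (θ / 2) ^ 2) ^ ((1 / 2 : ℝ) - 1)) = 4 ^ (-s) * lapSymbol θ ^ s := by
  have hsin : 0 < sin (θ / 2) := sin_pos_of_pos_of_lt_pi (by linarith [hθ.1])
    (by linarith [hθ.2, pi_pos])
  have hcos : 0 < cos (θ / 2) := cos_pos_of_mem_Ioo ⟨by linarith [hθ.1, pi_pos], by linarith [hθ.2]⟩
  have hsin_factor : sin (θ / 2) * (sin (θ / 2) ^ 2) ^ (s + 1 / 2 - 1) = (sin (θ / 2) ^ 2) ^ s := by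
    rw [← rpow_natCast_mul hsin.le, ← rpow_natCast_mul hsin.le, mul_comm, ← rpow_add_one hsin.ne']
    congr 1
    push_cast
    ring
  have hcos_factor : cos (θ / 2) * (1 - sin (θ / 2) ^ 2) ^ ((1 / 2 : ℝ) - 1) = 1 := by
    rw [← cos_sq', ← rpow_natCast_mul hcos.le, mul_comm, ← rpow_add_one hcos.ne']
    norm_num
  rw [mul_mul_mul_comm, hsin_factor, hcos_factor, lapSymbol_eq_four_mul_sin_half_sq,
    mul_rpow (by norm_num) (by positivity), rpow_neg (by norm_num),
    inv_mul_cancel_left₀ (by positivity), mul_one]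

lemma hasDerivAt_sin_half_sq (θ : ℝ) :
    HasDerivAt (fun θ => sin (θ / 2) ^ 2) (sin (θ / 2) * cos (θ / 2)) θ := by
  exact (((hasDerivAt_id' θ).div_const 2).sin.pow 2).congr_deriv (by push_cast; ring)

lemma sin_half_mul_cos_half_nonneg (hθ : θ ∈ Ioo (min 0 π) (max 0 π)) :
    0 ≤ sin (θ / 2) * cos (θ / 2) := by
  rw [min_eq_left pi_pos.le, max_eq_right pi_pos.le] at hθ
  exact mul_nonneg (sin_nonneg_of_nonneg_of_le_pi (by linarith [hθ.1]) (by linarith [hθ.1, hθ.2]))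
    (cos_nonneg_of_mem_Icc ⟨by linarith [hθ.1, pi_pos], by linarith [hθ.2]⟩)

lemma intervalIntegrable_comp_sin_half_sq_iff {g : ℝ → ℝ} :
    IntervalIntegrable (fun θ => sin (θ / 2) * cos (θ / 2) * g (sin (θ / 2) ^ 2)) volume 0 π ↔
      IntervalIntegrable g volume 0 1 := by
  simpa using intervalIntegral.integrable_deriv_smul_comp_iff_of_deriv_nonneg (g := g)
    (f := fun θ => sin (θ / 2) ^ 2) (a := 0) (b := π) (by fun_prop)
    (fun θ _ => hasDerivAt_sin_half_sq θ) fun θ hθ => sin_half_mul_cos_half_nonneg hθ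

lemma integral_comp_sin_half_sq (g : ℝ → ℝ) :
    ∫ θ in 0..π, sin (θ / 2) * cos (θ / 2) * g (sin (θ / 2) ^ 2) = ∫ x in 0..1, g x := by
  simpa using intervalIntegral.integral_deriv_smul_comp_of_deriv_nonneg (g := g)
    (f := fun θ => sin (θ / 2) ^ 2) (a := 0) (b := π) (by fun_prop)
    (fun θ _ => hasDerivAt_sin_half_sq θ) fun θ hθ => sin_half_mul_cos_half_nonneg hθ

end Symbol

/-- The cosine moment `∫₀^π |1 - e^{iθ}|^{2s} cos(kθ) dθ`, i.e. `π` times the `k`-th Fourier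
coefficient of the symbol of the fractional Laplacian `(-Δ_ℤ)^s`. -/
noncomputable def cosMoment (s : ℝ) (k : ℤ) : ℝ := ∫ θ in 0..π, lapSymbol θ ^ s * cos (k * θ)

/-- The sine moment `∫₀^π |1 - e^{iθ}|^{2(s-1)} sin θ sin(nθ) dθ`. As functions of `n`, the sine
moments serve as ground states of the fractional Laplacian on the half-line. -/
noncomputable def sinMoment (s : ℝ) (n : ℕ) : ℝ :=
  ∫ θ in 0..π, lapSymbol θ ^ (s - 1) * sin θ * sin (n * θ)

section Moments

variable {s : ℝ}

lemma intervalIntegrable_lapSymbol_rpow (hs : -1 / 2 < s) :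
    IntervalIntegrable (fun θ => lapSymbol θ ^ s) volume 0 π := by
  have hbeta := intervalIntegrable_comp_sin_half_sq_iff.2
    (intervalIntegrable_rpow_mul_one_sub_rpow (p := s + 1 / 2) (q := 1 / 2) (by linarith)
      (by norm_num))
  have hscaled := hbeta.congr_uIoo fun θ hθ =>
    sin_half_mul_cos_half_mul_beta_integrand s (uIoo_of_le pi_pos.le ▸ hθ)
  simpa [← mul_assoc, ← rpow_add] using hscaled.const_mul (4 ^ s)

lemma integral_lapSymbol_rpow (hs : -1 / 2 < s) :
    ∫ θ in 0..π, lapSymbol θ ^ s = 4 ^ s * √π * Gamma (s + 1 / 2) / Gamma (s + 1) := by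
  have hbeta : 4 ^ (-s) * ∫ θ in 0..π, lapSymbol θ ^ s =
      Gamma (s + 1 / 2) * Gamma (1 / 2) / Gamma (s + 1 / 2 + 1 / 2) := by
    rw [← integral_rpow_mul_one_sub_rpow (by linarith) (by norm_num), ← integral_comp_sin_half_sq,
      ← intervalIntegral.integral_const_mul]
    exact (intervalIntegral.integral_congr_Ioo_of_le pi_pos.le fun θ hθ =>
      sin_half_mul_cos_half_mul_beta_integrand s hθ).symm
  rw [Gamma_one_half_eq, add_assoc, add_halves, rpow_neg (by norm_num),
    inv_mul_eq_iff_eq_mul₀ (by positivity)] at hbeta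
  rw [hbeta]
  ring

lemma lapSymbol_rpow_sub_one_mul (s : ℝ) {θ : ℝ} (hθ : θ ∈ Ioc 0 π) :
    lapSymbol θ ^ (s - 1) * lapSymbol θ = lapSymbol θ ^ s := by
  rw [rpow_sub_one (lapSymbol_pos hθ).ne', div_mul_cancel₀ _ (lapSymbol_pos hθ).ne']

lemma intervalIntegrable_lapSymbol_rpow_mul_cos (hs : -1 / 2 < s) (x : ℝ) :
    IntervalIntegrable (fun θ => lapSymbol θ ^ s * cos (x * θ)) volume 0 π :=
  (intervalIntegrable_lapSymbol_rpow hs).mul_continuousOn (by fun_prop)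

lemma measurable_sinMoment_integrand (s : ℝ) (n : ℕ) :
    Measurable fun θ => lapSymbol θ ^ (s - 1) * sin θ * sin (n * θ) :=
  (((continuous_lapSymbol.measurable.pow_const _).mul measurable_sin)).mul (by fun_prop)

lemma abs_sinMoment_integrand_le (s : ℝ) (n : ℕ) {θ : ℝ} (hθ : θ ∈ Ioc 0 π) :
    |lapSymbol θ ^ (s - 1) * sin θ * sin (n * θ)| ≤ n * lapSymbol θ ^ s := by
  have hpow : 0 ≤ lapSymbol θ ^ (s - 1) := rpow_nonneg (lapSymbol_nonneg θ) _
  calc |lapSymbol θ ^ (s - 1) * sin θ * sin (n * θ)|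
      = lapSymbol θ ^ (s - 1) * |sin θ| * |sin (n * θ)| := by
        rw [abs_mul, abs_mul, abs_of_nonneg hpow]
    _ ≤ lapSymbol θ ^ (s - 1) * |sin θ| * (n * |sin θ|) := by
        gcongr
        exact abs_sin_natCast_mul_le n θ
    _ = n * (lapSymbol θ ^ (s - 1) * sin θ ^ 2) := by rw [← sq_abs (sin θ)]; ring
    _ ≤ n * (lapSymbol θ ^ (s - 1) * lapSymbol θ) := by
        gcongr
        exact sin_sq_le_lapSymbol θ
    _ = n * lapSymbol θ ^ s := by rw [lapSymbol_rpow_sub_one_mul s hθ]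

lemma intervalIntegrable_sinMoment_integrand (hs : -1 / 2 < s) (n : ℕ) :
    IntervalIntegrable (fun θ => lapSymbol θ ^ (s - 1) * sin θ * sin (n * θ)) volume 0 π := by
  refine ((intervalIntegrable_lapSymbol_rpow hs).const_mul n).mono_fun'
    (measurable_sinMoment_integrand s n).aestronglyMeasurable ?_
  filter_upwards [ae_restrict_mem measurableSet_uIoc] with θ hθ
  rw [uIoc_of_le pi_pos.le] at hθ
  exact abs_sinMoment_integrand_le s n hθ

lemma hasDerivAt_lapSymbol_rpow_mul_sin (s x : ℝ) {θ : ℝ} (hθ : θ ∈ Ioc 0 π) :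
    HasDerivAt (fun θ => lapSymbol θ ^ s * sin (x * θ))
      (2 * s * (lapSymbol θ ^ (s - 1) * sin θ * sin (x * θ)) + x * (lapSymbol θ ^ s * cos (x * θ)))
      θ := by
  have hpow := (hasDerivAt_lapSymbol θ).rpow_const (p := s) (Or.inl (lapSymbol_pos hθ).ne')
  exact (hpow.mul ((hasDerivAt_id' θ).const_mul x).sin).congr_deriv (by ring)

lemma abs_lapSymbol_rpow_mul_sin_le (s : ℝ) (n : ℕ) {θ : ℝ} (hθ : θ ∈ Ioc 0 π) :
    |lapSymbol θ ^ s * sin (n * θ)| ≤ n * lapSymbol θ ^ (s + 1 / 2) := by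
  have hw := lapSymbol_pos hθ
  have hsin : |sin θ| ≤ lapSymbol θ ^ (1 / 2 : ℝ) := by
    rw [← sqrt_eq_rpow]
    exact abs_le_sqrt (sin_sq_le_lapSymbol θ)
  calc |lapSymbol θ ^ s * sin (n * θ)| = lapSymbol θ ^ s * |sin (n * θ)| := by
        rw [abs_mul, abs_of_pos (rpow_pos_of_pos hw s)]
    _ ≤ lapSymbol θ ^ s * (n * lapSymbol θ ^ (1 / 2 : ℝ)) := by
        gcongr
        exact (abs_sin_natCast_mul_le n θ).trans (by gcongr)
    _ = n * lapSymbol θ ^ (s + 1 / 2) := by rw [rpow_add hw]; ring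

lemma tendsto_lapSymbol_rpow_mul_sin (hs : -1 / 2 < s) (n : ℕ) :
    Tendsto (fun θ => lapSymbol θ ^ s * sin (n * θ)) (𝓝[>] 0) (𝓝 0) := by
  have hbound : Tendsto (fun θ => n * lapSymbol θ ^ (s + 1 / 2)) (𝓝[>] 0) (𝓝 0) := by
    have hcont := (continuous_lapSymbol_rpow (s := s + 1 / 2) (by linarith)).const_mul (n : ℝ)
    have hzero : n * lapSymbol 0 ^ (s + 1 / 2) = 0 := by
      rw [lapSymbol, cos_zero, mul_one, sub_self, zero_rpow (by linarith), mul_zero]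
    simpa only [hzero] using (hcont.tendsto 0).mono_left nhdsWithin_le_nhds
  refine squeeze_zero_norm' ?_ hbound
  filter_upwards [Ioc_mem_nhdsGT pi_pos] with θ hθ
  exact abs_lapSymbol_rpow_mul_sin_le s n hθ

lemma two_mul_mul_sinMoment (hs : -1 / 2 < s) (n : ℕ) :
    2 * s * sinMoment s n = -(n * cosMoment s n) := by
  have hsin := (intervalIntegrable_sinMoment_integrand hs n).const_mul (2 * s)
  have hcos := (intervalIntegrable_lapSymbol_rpow_mul_cos hs n).const_mul (n : ℝ)
  have hFTC := intervalIntegral.integral_eq_sub_of_hasDerivAt_of_tendsto pi_pos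
    (fun θ hθ => hasDerivAt_lapSymbol_rpow_mul_sin s n (Ioo_subset_Ioc_self hθ)) (hsin.add hcos)
    (tendsto_lapSymbol_rpow_mul_sin hs n)
    ((hasDerivAt_lapSymbol_rpow_mul_sin s n
      (right_mem_Ioc.2 pi_pos)).continuousAt.tendsto.mono_left nhdsWithin_le_nhds)
  rw [intervalIntegral.integral_add hsin hcos, intervalIntegral.integral_const_mul,
    intervalIntegral.integral_const_mul, sin_nat_mul_pi, mul_zero, sub_zero] at hFTC
  simpa [sinMoment, cosMoment] using eq_neg_of_add_eq_zero_left hFTC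

lemma lapSymbol_mul_cos_add_cos (x θ : ℝ) :
    lapSymbol θ * (cos ((x + 1) * θ) + cos (x * θ)) =
      2 * (sin θ * (sin ((x + 1) * θ) - sin (x * θ))) := by
  rw [add_one_mul, cos_add, sin_add, lapSymbol]
  linear_combination -(2 * cos (x * θ)) * sin_sq_add_cos_sq θ

lemma cosMoment_succ_add_cosMoment (hs : -1 / 2 < s) (n : ℕ) :
    cosMoment s (n + 1) + cosMoment s n = 2 * (sinMoment s (n + 1) - sinMoment s n) := by
  have hcos (m : ℕ) := intervalIntegrable_lapSymbol_rpow_mul_cos hs m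
  have hsin := intervalIntegrable_sinMoment_integrand hs
  have hcosMoment (m : ℕ) : cosMoment s m = ∫ θ in 0..π, lapSymbol θ ^ s * cos (m * θ) := by
    simp [cosMoment]
  rw [← Nat.cast_succ, hcosMoment, hcosMoment, ← intervalIntegral.integral_add (hcos _) (hcos _),
    sinMoment, sinMoment, ← intervalIntegral.integral_sub (hsin _) (hsin _),
    ← intervalIntegral.integral_const_mul]
  refine intervalIntegral.integral_congr_Ioo_of_le pi_pos.le fun θ hθ => ?_
  have htrig := lapSymbol_mul_cos_add_cos n θ
  simp only [Nat.cast_succ, ← lapSymbol_rpow_sub_one_mul s (Ioo_subset_Ioc_self hθ)]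
  linear_combination lapSymbol θ ^ (s - 1) * htrig

lemma cosMoment_succ (hs : -1 / 2 < s) (n : ℕ) :
    (s + n + 1) * cosMoment s (n + 1) = (n - s) * cosMoment s n := by
  have hparts := two_mul_mul_sinMoment hs n
  have hparts_succ := two_mul_mul_sinMoment hs (n + 1)
  push_cast at hparts_succ
  linear_combination s * cosMoment_succ_add_cosMoment hs n + hparts_succ - hparts

lemma sinMoment_succ (hs : -1 / 2 < s) (n : ℕ) :
    n * (n + 1 + s) * sinMoment s (n + 1) = (n + 1) * (n - s) * sinMoment s n := by
  have hparts := two_mul_mul_sinMoment hs n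
  have hparts_succ := two_mul_mul_sinMoment hs (n + 1)
  push_cast at hparts_succ
  linear_combination -(n * (n + 1) / 2 : ℝ) * cosMoment_succ_add_cosMoment hs n
    + (n / 2 : ℝ) * hparts_succ + ((n + 1) / 2 : ℝ) * hparts

lemma cosMoment_zero (hs : -1 / 2 < s) :
    cosMoment s 0 = 4 ^ s * √π * Gamma (s + 1 / 2) / Gamma (s + 1) := by
  simpa [cosMoment] using integral_lapSymbol_rpow hs

lemma sinMoment_zero (s : ℝ) : sinMoment s 0 = 0 := by
  simp [sinMoment]

lemma sinMoment_one (hs : -1 / 2 < s) : 2 * (s + 1) * sinMoment s 1 = cosMoment s 0 := by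
  have hparts := two_mul_mul_sinMoment hs 1
  have hsum := cosMoment_succ_add_cosMoment hs 0
  simp only [Nat.cast_zero, zero_add, sinMoment_zero, Nat.cast_one] at hparts hsum
  linear_combination hparts - hsum

end Moments

section Kernel

lemma rbinom_sub_right (a b : ℝ) : rbinom a (a - b) = rbinom a b := by
  rw [rbinom, rbinom, sub_sub_cancel, mul_comm]

lemma add_one_mul_rbinom_add_one (a b : ℝ) : (b + 1) * rbinom a (b + 1) = (a - b) * rbinom a b := by
  have hleft := inv_Gamma_eq_mul_inv_Gamma_add_one (b + 1)
  have hright := inv_Gamma_eq_mul_inv_Gamma_add_one (a - b)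
  rw [rbinom, rbinom, div_eq_mul_inv, div_eq_mul_inv, mul_inv, mul_inv, hleft,
    show a - (b + 1) + 1 = a - b by ring, hright]
  ring

variable {s σ : ℝ}

lemma cosMoment_neg (s : ℝ) (k : ℤ) : cosMoment s (-k) = cosMoment s k := by
  simp [cosMoment]

lemma cosMoment_zero_eq_pi_mul_rbinom (hs : -1 / 2 < s) :
    cosMoment s 0 = π * rbinom (2 * s) s := by
  have hdup := Gamma_mul_Gamma_add_half (s + 1 / 2)
  have hpow : (2 : ℝ) ^ (1 - 2 * (s + 1 / 2)) = (4 ^ s)⁻¹ := by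
    rw [show (4 : ℝ) = 2 ^ (2 : ℝ) by norm_num, ← rpow_mul two_pos.le, ← rpow_neg two_pos.le]
    congr 1
    ring
  rw [hpow, add_assoc, add_halves, mul_add, mul_one_div_cancel two_ne_zero] at hdup
  have hΓ := Gamma_pos_of_pos (show 0 < s + 1 by linarith)
  have hsq := sq_sqrt pi_pos.le
  rw [cosMoment_zero hs, rbinom, two_mul s, add_sub_cancel_right, ← two_mul]
  field_simp at hdup ⊢
  linear_combination √π * hdup + Gamma (s * 2 + 1) * hsq

lemma cosMoment_natCast_eq_pi_mul_rbinom (hs : -1 / 2 < s) (n : ℕ) :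
    cosMoment s n = π * ((-1) ^ n * rbinom (2 * s) (s + n)) := by
  induction n with
  | zero => simpa using cosMoment_zero_eq_pi_mul_rbinom hs
  | succ n ih =>
    have hne : s + n + 1 ≠ 0 := by linarith [n.cast_nonneg (α := ℝ)]
    have hrec := add_one_mul_rbinom_add_one (2 * s) (s + n)
    push_cast
    refine mul_left_cancel₀ hne ?_
    rw [cosMoment_succ hs n, ih, ← add_assoc, pow_succ]
    linear_combination π * (-1) ^ n * hrec

lemma cosMoment_eq_pi_mul_rbinom (hs : -1 / 2 < s) (k : ℤ) :
    cosMoment s k = π * ((-1) ^ k * rbinom (2 * s) (s + k)) := by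
  obtain ⟨n, rfl | rfl⟩ := k.eq_nat_or_neg
  · exact_mod_cast cosMoment_natCast_eq_pi_mul_rbinom hs n
  · rw [cosMoment_neg, cosMoment_natCast_eq_pi_mul_rbinom hs, ← rbinom_sub_right]
    push_cast
    rw [zpow_neg, zpow_natCast, ← inv_pow, inv_neg_one]
    congr 3
    ring

lemma pi_mul_Kker (hs : -1 / 2 < s) (m n : ℕ) :
    π * Kker s m n = cosMoment s (m - n) - cosMoment s (m + n) := by
  have hsign : (-1 : ℝ) ^ ((m : ℤ) - n) = (-1) ^ (m + n) := by
    rw [zpow_sub₀ (by norm_num), zpow_natCast, zpow_natCast, pow_add, div_eq_mul_inv, ← inv_pow,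
      inv_neg_one]
  rw [cosMoment_eq_pi_mul_rbinom hs, cosMoment_eq_pi_mul_rbinom hs, hsign, Kker]
  norm_cast
  push_cast
  rw [← add_sub_assoc, ← add_assoc]
  ring

lemma cosMoment_zero_pos (hs : -1 / 2 < s) : 0 < cosMoment s 0 := by
  have hΓ := Gamma_pos_of_pos (show 0 < s + 1 / 2 by linarith)
  have hΓ_one := Gamma_pos_of_pos (show 0 < s + 1 by linarith)
  rw [cosMoment_zero hs]
  positivity

lemma cosMoment_succ_nonpos (hσ : 0 ≤ σ) (hσ1 : σ ≤ 1) (n : ℕ) : cosMoment σ (n + 1) ≤ 0 := by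
  have of_mul_nonpos (n : ℕ) (hn : (n - σ) * cosMoment σ n ≤ 0) : cosMoment σ (n + 1) ≤ 0 :=
    nonpos_of_mul_nonpos_right ((cosMoment_succ (by linarith) n).trans_le hn)
      (by positivity : 0 < σ + n + 1)
  induction n with
  | zero =>
    refine of_mul_nonpos 0 ?_
    simpa using mul_nonneg hσ (cosMoment_zero_pos (by linarith)).le
  | succ n ih =>
    refine of_mul_nonpos (n + 1) ?_
    push_cast
    exact mul_nonpos_of_nonneg_of_nonpos (by linarith [n.cast_nonneg (α := ℝ)]) ih

lemma cosMoment_succ_sub (hs : -1 / 2 < s) (n : ℕ) :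
    (s + n + 1) * (cosMoment s (n + 1) - cosMoment s n) = -(1 + 2 * s) * cosMoment s n := by
  linear_combination cosMoment_succ hs n

lemma monotone_cosMoment_succ (hσ : 0 ≤ σ) (hσ1 : σ ≤ 1) :
    Monotone fun n : ℕ => cosMoment σ (n + 1) := by
  refine monotone_nat_of_le_succ fun n => sub_nonneg.1 ?_
  refine nonneg_of_mul_nonneg_right (a := σ + (n + 1 : ℕ) + 1) ?_ (by positivity)
  have hdiff := cosMoment_succ_sub (show -1 / 2 < σ by linarith) (n + 1)
  push_cast at hdiff ⊢
  rw [hdiff]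
  exact mul_nonneg_of_nonpos_of_nonpos (by linarith) (cosMoment_succ_nonpos hσ hσ1 n)

lemma sum_range_cosMoment_succ (hs : -1 / 2 < σ) (N : ℕ) :
    2 * σ * ∑ n ∈ Finset.range N, cosMoment σ (n + 1) =
      (σ + 1) * cosMoment σ 1 - (σ + N + 1) * cosMoment σ (N + 1) := by
  induction N with
  | zero => simp
  | succ N ih =>
    have hrec := cosMoment_succ hs (N + 1)
    rw [Finset.sum_range_succ, mul_add, ih]
    push_cast at hrec ⊢
    linear_combination hrec

lemma summable_cosMoment_succ (hσ : 0 < σ) (hσ1 : σ ≤ 1) :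
    Summable fun n : ℕ => cosMoment σ (n + 1) := by
  have hnonpos := cosMoment_succ_nonpos hσ.le hσ1
  refine summable_neg_iff.1 (summable_of_sum_range_le (c := -((σ + 1) * cosMoment σ 1) / (2 * σ))
    (fun n => neg_nonneg.2 (hnonpos n)) fun N => ?_)
  have hlast : (σ + N + 1) * cosMoment σ (N + 1) ≤ 0 :=
    mul_nonpos_of_nonneg_of_nonpos (by positivity) (hnonpos N)
  rw [le_div_iff₀ (by positivity), Finset.sum_neg_distrib, neg_mul, mul_comm,
    sum_range_cosMoment_succ (by linarith)]
  linarith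

lemma summable_cosMoment (hσ : 0 < σ) (hσ1 : σ ≤ 1) : Summable (cosMoment σ) := by
  have hnat : Summable fun n : ℕ => cosMoment σ n :=
    (summable_nat_add_iff 1).1 (by exact_mod_cast summable_cosMoment_succ hσ hσ1)
  exact Summable.of_nat_of_neg hnat (by simpa only [cosMoment_neg] using hnat)

lemma Kker_comm (σ : ℝ) (m n : ℕ) : Kker σ m n = Kker σ n m := by
  rw [Kker, Kker, ← rbinom_sub_right (2 * σ) (σ + m - n), add_comm m n]
  congr 3 <;> ring

lemma pi_mul_Kker_add_add_one (hs : -1 / 2 < s) (m n : ℕ) :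
    π * Kker s m (m + n + 1) = cosMoment s (n + 1) - cosMoment s (n + 2 * m + 1) := by
  rw [pi_mul_Kker hs, ← cosMoment_neg]
  push_cast
  congr 2 <;> ring

lemma Kker_add_add_one_nonpos (hσ : 0 ≤ σ) (hσ1 : σ ≤ 1) (m n : ℕ) :
    Kker σ m (m + n + 1) ≤ 0 := by
  refine nonpos_of_mul_nonpos_right (a := π) ?_ pi_pos
  rw [pi_mul_Kker_add_add_one (by linarith), sub_nonpos]
  exact_mod_cast monotone_cosMoment_succ hσ hσ1 (show n ≤ n + 2 * m by omega)

lemma Kker_nonpos (hσ : 0 ≤ σ) (hσ1 : σ ≤ 1) {m n : ℕ} (hmn : m ≠ n) : Kker σ m n ≤ 0 := by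
  rcases hmn.lt_or_gt with h | h
  · obtain ⟨k, rfl⟩ := Nat.exists_eq_add_of_lt h
    exact Kker_add_add_one_nonpos hσ hσ1 m k
  · obtain ⟨k, rfl⟩ := Nat.exists_eq_add_of_lt h
    exact Kker_comm σ n _ ▸ Kker_add_add_one_nonpos hσ hσ1 n k

lemma mul_cosMoment_step_le (hσ : 0 ≤ σ) (hσ1 : σ ≤ 1) (n j : ℕ) :
    (n + 1) * (cosMoment σ (n + j + 1 + 1) - cosMoment σ (n + j + 1)) ≤
      (1 + 2 * σ) * -cosMoment σ (n + 1) := by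
  have hmono := monotone_cosMoment_succ hσ hσ1
  have hstep : 0 ≤ cosMoment σ (n + j + 1 + 1) - cosMoment σ (n + j + 1) := by
    exact_mod_cast sub_nonneg.2 (hmono (n + j).le_succ)
  have hle : cosMoment σ (n + 1) ≤ cosMoment σ (n + j + 1) := by
    exact_mod_cast hmono (n.le_add_right j)
  have hdiff := cosMoment_succ_sub (show -1 / 2 < σ by linarith) (n + j + 1)
  push_cast at hdiff
  calc (n + 1) * (cosMoment σ (n + j + 1 + 1) - cosMoment σ (n + j + 1))
      ≤ (σ + (n + j + 1) + 1) * (cosMoment σ (n + j + 1 + 1) - cosMoment σ (n + j + 1)) :=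
        mul_le_mul_of_nonneg_right (by linarith [j.cast_nonneg (α := ℝ)]) hstep
    _ = (1 + 2 * σ) * -cosMoment σ (n + j + 1) := by rw [hdiff]; ring
    _ ≤ (1 + 2 * σ) * -cosMoment σ (n + 1) := by gcongr

lemma mul_cosMoment_add_sub_le (hσ : 0 ≤ σ) (hσ1 : σ ≤ 1) (n j : ℕ) :
    (n + 1) * (cosMoment σ (n + j + 1) - cosMoment σ (n + 1)) ≤
      (1 + 2 * σ) * j * -cosMoment σ (n + 1) := by
  induction j with
  | zero => simp
  | succ j ih =>
    have hstep := mul_cosMoment_step_le hσ hσ1 n j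
    push_cast
    rw [← add_assoc (n : ℤ)]
    linear_combination ih + hstep

lemma pi_mul_abs_Kker_mul_le (hσ : 0 ≤ σ) (hσ1 : σ ≤ 1) (m n : ℕ) :
    π * (|Kker σ m (m + n + 1)| * (m + n + 1)) ≤
      (m + 1) * ((1 + 2 * σ) * (2 * m)) * -cosMoment σ (n + 1) := by
  have hbound := mul_cosMoment_add_sub_le hσ hσ1 n (2 * m)
  have hK := pi_mul_Kker_add_add_one (show -1 / 2 < σ by linarith) m n
  push_cast at hbound
  calc π * (|Kker σ m (m + n + 1)| * (m + n + 1))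
      = -(π * Kker σ m (m + n + 1)) * (m + n + 1) := by
        rw [abs_of_nonpos (Kker_add_add_one_nonpos hσ hσ1 m n)]; ring
    _ ≤ -(π * Kker σ m (m + n + 1)) * ((m + 1) * (n + 1)) := by
        refine mul_le_mul_of_nonneg_left ?_ (neg_nonneg.2 (mul_nonpos_of_nonneg_of_nonpos
          pi_pos.le (Kker_add_add_one_nonpos hσ hσ1 m n)))
        linarith [mul_nonneg (m.cast_nonneg (α := ℝ)) (n.cast_nonneg (α := ℝ))]
    _ = (m + 1) * ((n + 1) * (cosMoment σ (n + 2 * m + 1) - cosMoment σ (n + 1))) := by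
        rw [hK]; ring
    _ ≤ (m + 1) * ((1 + 2 * σ) * (2 * m) * -cosMoment σ (n + 1)) := by gcongr
    _ = (m + 1) * ((1 + 2 * σ) * (2 * m)) * -cosMoment σ (n + 1) := by ring

lemma summable_abs_Kker_mul (hσ : 0 < σ) (hσ1 : σ ≤ 1) (m : ℕ) :
    Summable fun n : ℕ => |Kker σ m n| * n := by
  rw [← summable_nat_add_iff (m + 1), ← summable_mul_left_iff pi_ne_zero]
  refine Summable.of_nonneg_of_le (fun n => by positivity) (fun n => ?_)
    ((summable_cosMoment_succ hσ hσ1).neg.mul_left ((m + 1) * ((1 + 2 * σ) * (2 * m))))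
  rw [show n + (m + 1) = m + n + 1 by ring]
  exact_mod_cast pi_mul_abs_Kker_mul_le hσ.le hσ1 m n

end Kernel

section FourierSeries

variable {s σ : ℝ}

lemma exp_mul_add_exp_neg_mul_lapSymbol_rpow (s : ℝ) (k : ℤ) (θ : ℝ) :
    Complex.exp (-(k * θ * Complex.I)) * (lapSymbol θ ^ s : ℝ) +
        Complex.exp (-(k * (-θ : ℝ) * Complex.I)) * (lapSymbol (-θ) ^ s : ℝ) =
      ((2 * (lapSymbol θ ^ s * cos (k * θ)) : ℝ) : ℂ) := by
  rw [lapSymbol, lapSymbol, cos_neg]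
  push_cast
  rw [Complex.cos, mul_neg, neg_mul, neg_neg]
  ring

lemma integral_exp_mul_lapSymbol_rpow (hs : 0 ≤ s) (k : ℤ) :
    ∫ θ in (-π)..π, Complex.exp (-(k * θ * Complex.I)) * (lapSymbol θ ^ s : ℝ) =
      2 * cosMoment s k := by
  set g : ℝ → ℂ := fun θ => Complex.exp (-(k * θ * Complex.I)) * (lapSymbol θ ^ s : ℝ) with hg
  have hcont : Continuous g := by
    have := continuous_lapSymbol_rpow hs
    fun_prop
  have hcont_neg : Continuous fun θ => g (-θ) := hcont.comp continuous_neg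
  calc ∫ θ in (-π)..π, g θ
      = (∫ θ in 0..π, g (-θ)) + ∫ θ in 0..π, g θ := by
        rw [intervalIntegral.integral_comp_neg, neg_zero,
          intervalIntegral.integral_add_adjacent_intervals (hcont.intervalIntegrable _ _)
            (hcont.intervalIntegrable _ _)]
    _ = ∫ θ in 0..π, ((2 * (lapSymbol θ ^ s * cos (k * θ)) : ℝ) : ℂ) := by
        rw [add_comm, ← intervalIntegral.integral_add (hcont.intervalIntegrable _ _)
          (hcont_neg.intervalIntegrable _ _)]
        simp only [hg, exp_mul_add_exp_neg_mul_lapSymbol_rpow]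
    _ = 2 * cosMoment s k := by
        rw [intervalIntegral.integral_ofReal, intervalIntegral.integral_const_mul, cosMoment]
        push_cast
        rfl

/-- The function `|1 - e^{iθ}|^{2s}` on the circle `ℝ / 2πℤ`. -/
noncomputable def lapSymbolPow (s : ℝ) (hs : 0 ≤ s) : C(AddCircle (2 * π), ℂ) where
  toFun := fun x : Angle => ((2 - 2 * x.cos) ^ s : ℝ)
  continuous_toFun := Complex.continuous_ofReal.comp
    ((continuous_const.sub (continuous_const.mul Angle.continuous_cos)).rpow_const
      fun _ => Or.inr hs)

lemma fourier_coe_two_pi (k : ℤ) (θ : ℝ) :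
    fourier k (θ : AddCircle (2 * π)) = Complex.exp (k * θ * Complex.I) := by
  have hpi : (π : ℂ) ≠ 0 := Complex.ofReal_ne_zero.2 pi_ne_zero
  rw [fourier_coe_apply]
  congr 1
  push_cast
  field_simp

lemma fourierCoeff_lapSymbolPow [Fact (0 < 2 * π)] (hs : 0 ≤ s) (k : ℤ) :
    fourierCoeff (lapSymbolPow s hs) k = ((cosMoment s k / π : ℝ) : ℂ) := by
  have hintegrand (θ : ℝ) : fourier (-k) (θ : AddCircle (2 * π)) • lapSymbolPow s hs θ =
      Complex.exp (-(k * θ * Complex.I)) * (lapSymbol θ ^ s : ℝ) := by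
    rw [fourier_coe_two_pi, smul_eq_mul]
    push_cast
    rw [neg_mul, neg_mul]
    rfl
  rw [fourierCoeff_eq_intervalIntegral _ _ (-π), show -π + 2 * π = π by ring]
  simp only [hintegrand]
  rw [integral_exp_mul_lapSymbol_rpow hs, Complex.real_smul, ← mul_assoc]
  push_cast
  ring

lemma hasSum_cosMoment_mul_exp (hσ : 0 < σ) (hσ1 : σ ≤ 1) (θ : ℝ) :
    HasSum (fun k : ℤ => cosMoment σ k * Complex.exp (k * θ * Complex.I))
      ((π * lapSymbol θ ^ σ : ℝ) : ℂ) := by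
  have : Fact (0 < 2 * π) := ⟨two_pi_pos⟩
  have hsummable : Summable (fourierCoeff (lapSymbolPow σ hσ.le)) := by
    simp only [funext (fourierCoeff_lapSymbolPow hσ.le)]
    exact_mod_cast (summable_cosMoment hσ hσ1).div_const π
  have hsum := (has_pointwise_sum_fourier_series_of_summable hsummable θ).mul_left (π : ℂ)
  have hpi : (π : ℂ) ≠ 0 := Complex.ofReal_ne_zero.2 pi_ne_zero
  rw [Complex.ofReal_mul]
  refine hsum.congr_fun fun k => ?_
  rw [fourierCoeff_lapSymbolPow, fourier_coe_two_pi, smul_eq_mul]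
  push_cast
  field_simp

lemma hasSum_cosMoment_mul_sin (hσ : 0 < σ) (hσ1 : σ ≤ 1) (x θ : ℝ) :
    HasSum (fun k : ℤ => cosMoment σ k * sin ((x - k) * θ))
      (π * lapSymbol θ ^ σ * sin (x * θ)) := by
  have hexp (k : ℤ) : Complex.exp (k * θ * Complex.I) = Complex.exp ((k * θ : ℝ) * Complex.I) := by
    push_cast
    rfl
  have hsum := hasSum_cosMoment_mul_exp hσ hσ1 θ
  simp only [hexp] at hsum
  have hcos := (Complex.hasSum_re hsum).mul_left (sin (x * θ))
  have hsin := (Complex.hasSum_im hsum).mul_left (cos (x * θ))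
  simp only [Complex.re_ofReal_mul, Complex.im_ofReal_mul, Complex.exp_ofReal_mul_I_re,
    Complex.exp_ofReal_mul_I_im, Complex.ofReal_re, Complex.ofReal_im] at hcos hsin
  have hvalue : sin (x * θ) * (π * lapSymbol θ ^ σ) - cos (x * θ) * 0 =
      π * lapSymbol θ ^ σ * sin (x * θ) := by ring
  refine (hvalue ▸ hcos.sub hsin).congr_fun fun k => ?_
  rw [sub_mul, sin_sub]
  ring

/- Reindexing by `k ↦ m - k` and folding `k` with `-k` turns the convolution on `ℤ` into the
half-line kernel. -/
lemma hasSum_Kker_mul_sin (hσ : 0 < σ) (hσ1 : σ ≤ 1) (m : ℕ) (θ : ℝ) :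
    HasSum (fun n : ℕ => Kker σ m n * sin (n * θ)) (lapSymbol θ ^ σ * sin (m * θ)) := by
  rw [← hasSum_mul_left_iff pi_ne_zero, ← mul_assoc]
  have hfold := ((Equiv.subLeft (m : ℤ)).hasSum_iff.2
    (hasSum_cosMoment_mul_sin hσ hσ1 m θ)).nat_add_neg
  simp only [Function.comp, Equiv.subLeft_apply, Int.cast_sub, Int.cast_add, Int.cast_natCast,
    sub_sub_cancel, sub_neg_eq_add, sub_add_cancel_left, sub_zero, sub_self, zero_mul, sin_zero,
    mul_zero, add_zero, neg_mul, sin_neg, mul_neg] at hfold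
  refine hfold.congr_fun fun n => ?_
  rw [← mul_assoc, pi_mul_Kker (by linarith)]
  ring

lemma hasSum_Kker_mul_sinMoment (hσ : 0 < σ) (hσ1 : σ ≤ 1) (hs : -1 / 2 < s) (m : ℕ) :
    HasSum (fun n : ℕ => Kker σ m n * sinMoment s n) (sinMoment (s + σ) m) := by
  have hK := summable_abs_Kker_mul hσ hσ1 m
  simp only [sinMoment, ← intervalIntegral.integral_const_mul]
  refine intervalIntegral.hasSum_integral_of_dominated_convergence
    (fun n θ => |Kker σ m n| * n * lapSymbol θ ^ s)
    (fun n => ((measurable_sinMoment_integrand s n).const_mul _).aestronglyMeasurable)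
    (fun n => .of_forall fun θ hθ => ?_) (.of_forall fun θ _ => hK.mul_right _) ?_
    (.of_forall fun θ hθ => ?_)
  · rw [norm_mul, mul_assoc |Kker σ m n|]
    exact mul_le_mul_of_nonneg_left
      (abs_sinMoment_integrand_le s n (uIoc_of_le pi_pos.le ▸ hθ)) (abs_nonneg _)
  · simp only [tsum_mul_right]
    exact (intervalIntegrable_lapSymbol_rpow hs).const_mul _
  · rw [uIoc_of_le pi_pos.le] at hθ
    have hsum := (hasSum_Kker_mul_sin hσ hσ1 m θ).mul_left (lapSymbol θ ^ (s - 1) * sin θ)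
    have hvalue : lapSymbol θ ^ (s - 1) * sin θ * (lapSymbol θ ^ σ * sin (m * θ)) =
        lapSymbol θ ^ (s + σ - 1) * sin θ * sin (m * θ) := by
      rw [add_sub_right_comm, rpow_add (lapSymbol_pos hθ)]
      ring
    exact (hvalue ▸ hsum).congr_fun fun n => by ring

end FourierSeries

section HardyWeight

variable {s σ α : ℝ} {n : ℕ}

lemma sinMoment_eq_Gamma (hs : -1 / 2 < s) (hs1 : s < 1) (n : ℕ) :
    sinMoment s n = √π / 2 * 4 ^ s * (n * Gamma (s + 1 / 2) * Gamma (n - s) /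
      (Gamma (1 - s) * Gamma (n + 1 + s))) := by
  have hΓ_one : Gamma (1 - s) ≠ 0 := (Gamma_pos_of_pos (by linarith)).ne'
  rcases n.eq_zero_or_pos with rfl | hn
  · simp [sinMoment_zero]
  induction n, hn using Nat.le_induction with
  | base =>
    have hΓ : Gamma (s + 1) ≠ 0 := (Gamma_pos_of_pos (by linarith)).ne'
    have hs2 : s + 1 ≠ 0 := by linarith
    apply mul_left_cancel₀ (mul_ne_zero two_ne_zero hs2)
    rw [sinMoment_one hs, cosMoment_zero hs, Nat.cast_one,
      show (1 : ℝ) + 1 + s = s + 1 + 1 by ring, Gamma_add_one hs2]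
    field_simp
  | succ n hn ih =>
    have hn1 : (1 : ℝ) ≤ n := mod_cast hn
    have hden : (n : ℝ) + 1 + s ≠ 0 := by linarith
    have hΓ : Gamma (n + 1 + s) ≠ 0 := (Gamma_pos_of_pos (by linarith)).ne'
    apply mul_left_cancel₀ (mul_ne_zero (show (n : ℝ) ≠ 0 by linarith) hden)
    rw [sinMoment_succ hs, ih, Nat.cast_add_one,
      show (n : ℝ) + 1 - s = n - s + 1 by ring, Gamma_add_one (by linarith),
      show (n : ℝ) + 1 + 1 + s = n + 1 + s + 1 by ring, Gamma_add_one hden]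
    field_simp

lemma sinMoment_pos (hs : -1 / 2 < s) (hs1 : s < 1) (hn : 1 ≤ n) : 0 < sinMoment s n := by
  have hn1 : (1 : ℝ) ≤ n := mod_cast hn
  have : 0 < Gamma (s + 1 / 2) := Gamma_pos_of_pos (by linarith)
  have : 0 < Gamma (n - s) := Gamma_pos_of_pos (by linarith)
  have : 0 < Gamma (1 - s) := Gamma_pos_of_pos (by linarith)
  have : 0 < Gamma (n + 1 + s) := Gamma_pos_of_pos (by linarith)
  rw [sinMoment_eq_Gamma hs hs1]
  positivity

lemma sinMoment_nonneg (hs : -1 / 2 < s) (hs1 : s < 1) (n : ℕ) : 0 ≤ sinMoment s n := by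
  rcases n.eq_zero_or_pos with rfl | hn
  · exact (sinMoment_zero s).ge
  · exact (sinMoment_pos hs hs1 hn).le

lemma Wweight_mul_sinMoment (hσ : 0 ≤ σ) (hσα : σ < α) (hα : α < 3 / 2) (n : ℕ) :
    Wweight σ α n * sinMoment (1 - α) n = sinMoment (1 - α + σ) n := by
  rcases n.eq_zero_or_pos with rfl | hn
  · simp [sinMoment_zero]
  have hn1 : (1 : ℝ) ≤ n := mod_cast hn
  have hΓ₁ : Gamma (3 / 2 - α) ≠ 0 := (Gamma_pos_of_pos (by linarith)).ne'
  have hΓ₂ : Gamma (n + α - 1) ≠ 0 := (Gamma_pos_of_pos (by linarith)).ne'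
  have hΓ₃ : Gamma α ≠ 0 := (Gamma_pos_of_pos (by linarith)).ne'
  have hΓ₄ : Gamma (n - α + 2) ≠ 0 := (Gamma_pos_of_pos (by linarith)).ne'
  rw [sinMoment_eq_Gamma (by linarith) (by linarith),
    sinMoment_eq_Gamma (by linarith) (by linarith), Wweight,
    rpow_add four_pos, show 1 - α + 1 / 2 = 3 / 2 - α by ring,
    show n - (1 - α) = n + α - 1 by ring, show 1 - (1 - α) = α by ring,
    show n + 1 + (1 - α) = n - α + 2 by ring,
    show 1 - α + σ + 1 / 2 = 3 / 2 - α + σ by ring,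
    show n - (1 - α + σ) = n + α - σ - 1 by ring, show 1 - (1 - α + σ) = α - σ by ring,
    show n + 1 + (1 - α + σ) = n - α + σ + 2 by ring]
  generalize Gamma (3 / 2 - α) = x at hΓ₁ ⊢
  field_simp

lemma Wweight_reflect (σ α : ℝ) (n : ℕ) :
    Wweight σ (3 / 2 + σ - α) n =
      4 ^ σ * (Gamma (3 / 2 - α + σ) * Gamma α / (Gamma (α - σ) * Gamma (3 / 2 - α))) *
        (Gamma (n + 1 / 2 - α) * Gamma (n + α - σ + 1 / 2) /
          (Gamma (n + α + 1 / 2) * Gamma (n + 1 / 2 + σ - α))) := by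
  rw [Wweight, show 3 / 2 - (3 / 2 + σ - α) + σ = α by ring,
    show 3 / 2 + σ - α = 3 / 2 - α + σ by ring, show 3 / 2 - α + σ - σ = 3 / 2 - α by ring,
    show 3 / 2 - (3 / 2 - α + σ) = α - σ by ring,
    show n + (3 / 2 - α + σ) - σ - 1 = n + 1 / 2 - α by ring,
    show n - (3 / 2 - α + σ) + 2 = n + α - σ + 1 / 2 by ring,
    show n - (3 / 2 - α + σ) + σ + 2 = n + α + 1 / 2 by ring,
    show n + (3 / 2 - α + σ) - 1 = n + 1 / 2 + σ - α by ring,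
    mul_comm (Gamma α), mul_comm (Gamma (3 / 2 - α))]

lemma mul_mul_mul_lt_reflect {x : ℝ} (hσ : 0 < σ) (hασ : (3 + 2 * σ) / 4 < α) (hx : 0 ≤ x) :
    (x + 1 / 2 - α) * (x + α - σ + 1 / 2) * (x - α + σ + 2) * (x + α - 1) <
      (x + α - σ - 1) * (x - α + 2) * (x + α + 1 / 2) * (x + 1 / 2 + σ - α) := by
  have hgap : 0 < 6 * (x + 1 / 2) * σ * (α - (3 + 2 * σ) / 4) :=
    mul_pos (by positivity) (sub_pos.2 hασ)
  linear_combination hgap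

lemma Gamma_mul_lt_Gamma_mul_reflect {x : ℝ} (hσ : 0 < σ) (hασ : (3 + 2 * σ) / 4 < α)
    (hα : α < 3 / 2) (hx : 1 ≤ x) :
    Gamma (x + α - σ - 1) * Gamma (x - α + 2) * Gamma (x + α + 1 / 2) *
        Gamma (x + 1 / 2 + σ - α) <
      Gamma (x + 1 / 2 - α) * Gamma (x + α - σ + 1 / 2) * Gamma (x - α + σ + 2) *
        Gamma (x + α - 1) := by
  let a := ![x + 1 / 2 - α, x + α - σ + 1 / 2, x - α + σ + 2, x + α - 1]
  let b := ![x + α - σ - 1, x - α + 2, x + α + 1 / 2, x + 1 / 2 + σ - α]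
  have ha (i : Fin 4) : 0 < a i := by fin_cases i <;> dsimp [a] <;> linarith
  have hb (i : Fin 4) : 0 < b i := by fin_cases i <;> dsimp [b] <;> linarith
  have hsum : ∑ i, a i = ∑ i, b i := by
    simp only [a, b, Fin.sum_univ_four, Matrix.cons_val]
    ring
  have hprod (j : ℕ) : ∏ i, (a i + j) < ∏ i, (b i + j) := by
    simp only [a, b, Fin.prod_univ_four, Matrix.cons_val]
    linear_combination mul_mul_mul_lt_reflect hσ hασ (show 0 ≤ x + j by positivity)
  have hΓ : ∏ i, Gamma (b i) < ∏ i, Gamma (a i) :=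
    prod_Gamma_lt_prod_Gamma (fun i _ => ha i) (fun i _ => hb i) hsum (fun j => (hprod j).le)
      (by simpa only [Nat.cast_zero, add_zero] using hprod 0)
  simpa only [a, b, Fin.prod_univ_four, Matrix.cons_val] using hΓ

lemma Wweight_lt_Wweight_reflect (hσ : 0 < σ) (hασ : (3 + 2 * σ) / 4 < α) (hα : α < 3 / 2)
    (hn : 1 ≤ n) : Wweight σ α n < Wweight σ (3 / 2 + σ - α) n := by
  have hn1 : (1 : ℝ) ≤ n := mod_cast hn
  have : 0 < Gamma (3 / 2 - α + σ) := Gamma_pos_of_pos (by linarith)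
  have : 0 < Gamma α := Gamma_pos_of_pos (by linarith)
  have : 0 < Gamma (α - σ) := Gamma_pos_of_pos (by linarith)
  have : 0 < Gamma (3 / 2 - α) := Gamma_pos_of_pos (by linarith)
  have hden_left₁ : 0 < Gamma (n - α + σ + 2) := Gamma_pos_of_pos (by linarith)
  have hden_left₂ : 0 < Gamma (n + α - 1) := Gamma_pos_of_pos (by linarith)
  have hden_right₁ : 0 < Gamma (n + α + 1 / 2) := Gamma_pos_of_pos (by linarith)
  have hden_right₂ : 0 < Gamma (n + 1 / 2 + σ - α) := Gamma_pos_of_pos (by linarith)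
  rw [Wweight_reflect, Wweight]
  apply mul_lt_mul_of_pos_left _ (by positivity)
  rw [div_lt_div_iff₀ (mul_pos hden_left₁ hden_left₂) (mul_pos hden_right₁ hden_right₂)]
  simpa only [mul_assoc] using Gamma_mul_lt_Gamma_mul_reflect hσ hασ hα hn1

end HardyWeight

section GroundState

variable {ι : Type*} {K : ι → ι → ℝ} {S : Finset ι} {u V : ι → ℝ}

lemma mul_le_half_div_add_div (a b : ℝ) {x y : ℝ} (hx : 0 < x) (hy : 0 < y) :
    a * b ≤ (a ^ 2 * y / x + b ^ 2 * x / y) / 2 := by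
  have hgap : 0 ≤ x * y * (a / x - b / y) ^ 2 / 2 := by positivity
  have hexpand : x * y * (a / x - b / y) ^ 2 / 2 =
      (a ^ 2 * y / x + b ^ 2 * x / y) / 2 - a * b := by
    field_simp
    ring
  linarith

lemma kernel_mul_add_div_two_le (hK : ∀ m n, m ≠ n → K m n ≤ 0)
    {m n : ι} (hum : 0 < u m) (hun : 0 < u n) (f : ι → ℝ) :
    (K m n * (f m ^ 2 * u n / u m) + K m n * (f n ^ 2 * u m / u n)) / 2 ≤ K m n * f m * f n := by
  rcases eq_or_ne m n with rfl | hmn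
  · apply le_of_eq
    field_simp
    ring
  · linear_combination mul_le_mul_of_nonpos_left
      (mul_le_half_div_add_div (f m) (f n) hum hun) (hK m n hmn)

lemma sum_div_mul_sum_kernel_le_sum_sum (hsymm : ∀ m n, K m n = K n m)
    (hK : ∀ m n, m ≠ n → K m n ≤ 0) (hu : ∀ m ∈ S, 0 < u m) (f : ι → ℝ) :
    ∑ m ∈ S, f m ^ 2 / u m * ∑ n ∈ S, K m n * u n ≤ ∑ m ∈ S, ∑ n ∈ S, K m n * f m * f n := by
  have hswap : ∑ m ∈ S, ∑ n ∈ S, K m n * (f n ^ 2 * u m / u n) =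
      ∑ m ∈ S, ∑ n ∈ S, K m n * (f m ^ 2 * u n / u m) := by
    rw [Finset.sum_comm]
    simp only [hsymm]
  calc ∑ m ∈ S, f m ^ 2 / u m * ∑ n ∈ S, K m n * u n
      = ∑ m ∈ S, ∑ n ∈ S, K m n * (f m ^ 2 * u n / u m) := by
        simp only [Finset.mul_sum]
        exact Finset.sum_congr rfl fun m _ => Finset.sum_congr rfl fun n _ => by ring
    _ = ∑ m ∈ S, ∑ n ∈ S,
          (K m n * (f m ^ 2 * u n / u m) + K m n * (f n ^ 2 * u m / u n)) / 2 := by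
        simp only [← Finset.sum_div, Finset.sum_add_distrib, hswap]
        ring
    _ ≤ ∑ m ∈ S, ∑ n ∈ S, K m n * f m * f n :=
        Finset.sum_le_sum fun m hm => Finset.sum_le_sum fun n hn =>
          kernel_mul_add_div_two_le hK (hu m hm) (hu n hn) f

lemma sum_mul_sq_le_sum_sum_of_mul_le (hsymm : ∀ m n, K m n = K n m) (hK : ∀ m n, m ≠ n → K m n ≤ 0)
    (hu : ∀ m ∈ S, 0 < u m) (hV : ∀ m ∈ S, V m * u m ≤ ∑ n ∈ S, K m n * u n) (f : ι → ℝ) :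
    ∑ m ∈ S, V m * f m ^ 2 ≤ ∑ m ∈ S, ∑ n ∈ S, K m n * f m * f n := by
  refine (Finset.sum_le_sum fun m hm => ?_).trans (sum_div_mul_sum_kernel_le_sum_sum hsymm hK hu f)
  have hum := hu m hm
  calc V m * f m ^ 2 = f m ^ 2 / u m * (V m * u m) := by field_simp
    _ ≤ f m ^ 2 / u m * ∑ n ∈ S, K m n * u n :=
      mul_le_mul_of_nonneg_left (hV m hm) (by positivity)

end GroundState

section Hardy

variable {σ α : ℝ} {f : ℕ → ℝ}

lemma Qform_eq_sum {S : Finset ℕ} (σ : ℝ) (hS : Function.support f ⊆ S) :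
    Qform σ f = ∑ m ∈ S, ∑ n ∈ S, Kker σ m n * f m * f n := by
  have hf {n : ℕ} (hn : n ∉ S) : f n = 0 := Function.notMem_support.1 fun h => hn (hS h)
  rw [Qform, tsum_eq_sum fun m hm => by simp [hf hm]]
  exact Finset.sum_congr rfl fun m _ => tsum_eq_sum fun n hn => by rw [hf hn, mul_zero]

lemma Wweight_mul_sinMoment_le_sum {S : Finset ℕ} (hσ : 0 < σ) (hσ1 : σ ≤ 1) (hσα : σ < α)
    (hα : α < 3 / 2) {m : ℕ} (hm : m ∈ S) :
    Wweight σ α m * sinMoment (1 - α) m ≤ ∑ n ∈ S, Kker σ m n * sinMoment (1 - α) n := by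
  have hs : -1 / 2 < 1 - α := by linarith
  have hsum := (hasSum_Kker_mul_sinMoment hσ hσ1 hs m).neg
  rw [Wweight_mul_sinMoment hσ.le hσα hα, ← neg_le_neg_iff, ← Finset.sum_neg_distrib]
  refine sum_le_hasSum S (fun n hn => neg_nonneg.2 ?_) hsum
  exact mul_nonpos_of_nonpos_of_nonneg (Kker_nonpos hσ.le hσ1 (ne_of_mem_of_not_mem hm hn))
    (sinMoment_nonneg hs (by linarith) n)

lemma tsum_Wweight_mul_sq_le_Qform (hσ : 0 < σ) (hσ1 : σ ≤ 1) (hσα : σ < α) (hα : α < 3 / 2)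
    (hf : f 0 = 0) (hfin : (Function.support f).Finite) :
    ∑' n : ℕ, Wweight σ α n * f n ^ 2 ≤ Qform σ f := by
  have hS : Function.support f ⊆ hfin.toFinset := hfin.coe_toFinset.ge
  rw [Qform_eq_sum σ hS, tsum_eq_sum fun n hn => by
    rw [Function.notMem_support.1 (mt hfin.mem_toFinset.2 hn), sq, mul_zero, mul_zero]]
  refine sum_mul_sq_le_sum_sum_of_mul_le (u := sinMoment (1 - α)) (Kker_comm σ)
    (fun _ _ => Kker_nonpos hσ.le hσ1) (fun m hm => ?_)
    (fun m hm => Wweight_mul_sinMoment_le_sum hσ hσ1 hσα hα hm) f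
  have hm0 : m ≠ 0 := by
    rintro rfl
    exact hfin.mem_toFinset.1 hm hf
  exact sinMoment_pos (by linarith) (by linarith) (Nat.one_le_iff_ne_zero.2 hm0)

end Hardy

theorem stmt_10_general (σ α : ℝ) (hσ0 : 0 < σ) (hσ1 : σ ≤ 1)
    (hα1 : (3 + 2 * σ) / 4 < α) (hα2 : α < 3 / 2) :
    ∃ Wt : ℕ → ℝ, (∀ n, 0 ≤ Wt n) ∧ (∃ n, 1 ≤ n ∧ Wt n ≠ 0) ∧
      ∀ f : ℕ → ℝ, f 0 = 0 → (Function.support f).Finite →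
        (∑' n : ℕ, (Wweight σ α n + Wt n) * (f n) ^ 2) ≤ Qform σ f := by
  have hlt {n : ℕ} (hn : 1 ≤ n) : 0 < Wweight σ (3 / 2 + σ - α) n - Wweight σ α n :=
    sub_pos.2 (Wweight_lt_Wweight_reflect hσ0 hα1 hα2 hn)
  refine ⟨fun n => if n = 0 then 0 else Wweight σ (3 / 2 + σ - α) n - Wweight σ α n,
    fun n => ?_, ⟨1, le_rfl, by simpa using (hlt le_rfl).ne'⟩, fun f hf hfin => ?_⟩
  · dsimp only
    split_ifs with hn
    exacts [le_rfl, (hlt (Nat.one_le_iff_ne_zero.2 hn)).le]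
  · calc ∑' n, (Wweight σ α n + if n = 0 then 0 else _) * f n ^ 2
        = ∑' n, Wweight σ (3 / 2 + σ - α) n * f n ^ 2 := by
          refine tsum_congr fun n => ?_
          split_ifs with hn
          · simp [hn, hf]
          · rw [add_sub_cancel]
      _ ≤ Qform σ f :=
          tsum_Wweight_mul_sq_le_Qform hσ0 hσ1 (by linarith) (by linarith) hf hfin

/-- For `(3+2σ)/4 < α < min(3/2, 1+σ)` the Hardy-weight `W_{α,σ}` is not critical. -/
theorem stmt_10 (σ α : ℝ) (hσ0 : 0 < σ) (hσ1 : σ ≤ 1)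
    (hα1 : (3 + 2 * σ) / 4 < α) (hα2 : α < min (3/2) (1 + σ)) :
    ∃ Wt : ℕ → ℝ, (∀ n, 0 ≤ Wt n) ∧ (∃ n, 1 ≤ n ∧ Wt n ≠ 0) ∧
      ∀ f : ℕ → ℝ, f 0 = 0 → (Function.support f).Finite →
        (∑' n : ℕ, (Wweight σ α n + Wt n) * (f n) ^ 2) ≤ Qform σ f :=
  stmt_10_general σ α hσ0 hσ1 hα1 (hα2.trans_le (min_le_left _ _))
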